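/- (Chebyshev prediction bound) For every x ∈ ℝ^n and every ε > 0, the proposal-probability that the acceptance ratio deviates from its conditional mean by at least ε is bounded as ∫_{{z ∈ ℝ^n : |η(z, x) − 1/(N₁ w(x))| ≥ ε}} g(z) dz ≤ (1/N₂ − 1/N₁²)/(ε² w(x)²). -/

import Mathlib

open Matrix MeasureTheory ProbabilityTheory Finset

noncomputable section

/-!
In the coordinates `u = V L z`, where the rows of `V` are the eigenvectors of the
prior-preconditioned Hessian, both precision matrices become diagonal. The proposal is then a
product of one-dimensional Gaussians and the weight a product of factors `exp (-e_j u_j² / 2)`, with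
`e_j = μ λ_j` on the discarded modes and `e_j = 0` on the retained ones. Hence every moment `E[w^ℓ]`
factors into one-dimensional Gaussian integrals whose product is `1 / N_ℓ`. The bound is Chebyshev's
inequality for the random variable `η(·, x)`, with mean `1 / (N₁ w(x))` and second moment
`1 / (N₂ w(x)²)`.
-/

theorem setIntegral_abs_sub_integral_ge_le {α : Type*} [MeasurableSpace α] {ν : Measure α}
    {g f : α → ℝ} (hg : ∀ x, 0 ≤ g x) (hg_one : ∫ x, g x ∂ν = 1) (hf : Measurable f)
    (hgf : Integrable (fun x => g x * f x ^ 2) ν) {ε : ℝ} (hε : 0 < ε) :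
    ∫ x in {x | ε ≤ |f x - ∫ y, g y * f y ∂ν|}, g x ∂ν ≤
      (∫ x, g x * f x ^ 2 ∂ν - (∫ x, g x * f x ∂ν) ^ 2) / ε ^ 2 := by
  have hg_int : Integrable g ν := integrable_of_integral_eq_one hg_one
  have hg_meas : AEMeasurable (fun x => ENNReal.ofReal (g x)) ν :=
    hg_int.aemeasurable.ennreal_ofReal
  set P : Measure α := ν.withDensity fun x => ENNReal.ofReal (g x) with hP
  have : IsProbabilityMeasure P := ⟨by
    rw [hP, withDensity_apply _ .univ, Measure.restrict_univ,
      ← ofReal_integral_eq_lintegral_ofReal hg_int (ae_of_all _ hg), hg_one, ENNReal.ofReal_one]⟩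
  have integral_P (h : α → ℝ) : ∫ x, h x ∂P = ∫ x, g x * h x ∂ν := by
    simp only [hP, integral_withDensity_eq_integral_toReal_smul₀ hg_meas
      (ae_of_all _ fun _ => ENNReal.ofReal_lt_top), ENNReal.toReal_ofReal (hg _), smul_eq_mul]
  have hf_memLp : MemLp f 2 P := by
    rw [memLp_two_iff_integrable_sq hf.aestronglyMeasurable, hP,
      integrable_withDensity_iff_integrable_smul₀' hg_meas
        (ae_of_all _ fun _ => ENNReal.ofReal_lt_top)]
    simpa only [ENNReal.toReal_ofReal (hg _), smul_eq_mul] using hgf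
  have hS : MeasurableSet {x | ε ≤ |f x - ∫ y, f y ∂P|} :=
    measurableSet_le measurable_const (hf.sub_const _).abs
  have hvar : Var[f; P] = ∫ x, g x * f x ^ 2 ∂ν - (∫ x, g x * f x ∂ν) ^ 2 := by
    rw [variance_eq_sub hf_memLp, integral_P f]
    exact congrArg (· - _) (integral_P (f ^ 2))
  calc ∫ x in {x | ε ≤ |f x - ∫ y, g y * f y ∂ν|}, g x ∂ν
      = P.real {x | ε ≤ |f x - ∫ y, f y ∂P|} := by
        rw [measureReal_def, hP, withDensity_apply _ hS, integral_P f,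
          ← ofReal_integral_eq_lintegral_ofReal hg_int.restrict (ae_of_all _ hg),
          ENNReal.toReal_ofReal (integral_nonneg hg)]
    _ ≤ Var[f; P] / ε ^ 2 :=
        ENNReal.toReal_le_of_le_ofReal (div_nonneg (variance_nonneg f P) (sq_nonneg ε))
          (meas_ge_le_variance_div_sq hf_memLp hε)
    _ = _ := by rw [hvar]

section DiagonalForm

variable {ι κ R : Type*} [DecidableEq ι] [CommSemiring R]

theorem of_mul_transpose_eq_one [Fintype κ] {v : ι → κ → R}
    (hv : ∀ i j, v i ⬝ᵥ v j = if i = j then 1 else 0) : of v * (of v)ᵀ = 1 := by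
  ext i j
  simpa [mul_apply, dotProduct, one_apply] using hv i j

variable [Fintype ι]

theorem sum_smul_vecMulVec_eq_transpose_mul_diagonal_mul (v : ι → κ → R) (c : ι → R) :
    ∑ j, c j • vecMulVec (v j) (v j) = (of v)ᵀ * diagonal c * of v := by
  ext i j
  rw [mul_apply]
  simp only [Matrix.sum_apply, Matrix.smul_apply, vecMulVec_apply, mul_diagonal, transpose_apply,
    of_apply, smul_eq_mul]
  exact Finset.sum_congr rfl fun _ _ => by ring

theorem dotProduct_transpose_mul_diagonal_mul_mulVec [Fintype κ] (B : Matrix ι κ R)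
    (c : ι → R) (z : κ → R) :
    z ⬝ᵥ ((Bᵀ * diagonal c * B) *ᵥ z) = ∑ j, c j * (B *ᵥ z) j ^ 2 := by
  rw [← mulVec_mulVec, ← mulVec_mulVec, dotProduct_mulVec, vecMul_transpose, dotProduct]
  refine Finset.sum_congr rfl fun j _ => ?_
  rw [mulVec_diagonal]
  ring

theorem isUnit_det_transpose_mul_diagonal_mul {K : Type*} [Field K] {B : Matrix ι ι K}
    {d : ι → K} (hB : B.det ≠ 0) (hd : ∀ j, d j ≠ 0) : IsUnit (Bᵀ * diagonal d * B).det := by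
  simpa [hB, Finset.prod_eq_zero_iff] using hd

end DiagonalForm

section GaussianIntegral

theorem integral_exp_neg_mul_sq_gaussianReal (m : ℝ) (v : NNReal) {s : ℝ} (hs : 0 < 1 + s * v) :
    ∫ u, Real.exp (-(s * u ^ 2) / 2) ∂gaussianReal m v =
      Real.exp (-(s * m ^ 2) / (2 * (1 + s * v))) / √(1 + s * v) := by
  rcases eq_or_ne v 0 with rfl | hv
  · simp
  have hs_ne : 1 + v * s ≠ 0 := mul_comm s v ▸ hs.ne'
  have complete_square (u : ℝ) : gaussianPDFReal m v u • Real.exp (-(s * u ^ 2) / 2) =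
      (√(2 * Real.pi * v))⁻¹ * Real.exp (-(s * m ^ 2) / (2 * (1 + s * v))) *
        Real.exp (-((1 + s * v) / (2 * v)) * (u - m / (1 + s * v)) ^ 2) := by
    rw [gaussianPDFReal, smul_eq_mul, mul_assoc, mul_assoc _ (Real.exp _), ← Real.exp_add,
      ← Real.exp_add]
    congr 2
    field_simp
    ring
  have hsqrt : √(Real.pi / ((1 + s * v) / (2 * v))) = √(2 * Real.pi * v) / √(1 + s * v) := by
    rw [← Real.sqrt_div (by positivity)]
    congr 1
    field_simp
  simp only [integral_gaussianReal_eq_integral_smul hv, complete_square]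
  rw [integral_const_mul,
    integral_sub_right_eq_self fun u : ℝ => Real.exp (-((1 + s * v) / (2 * v)) * u ^ 2),
    integral_gaussian, hsqrt]
  field_simp

variable {ι : Type*} [Fintype ι] [DecidableEq ι]

theorem integral_comp_mulVec {E : Type*} [NormedAddCommGroup E] [NormedSpace ℝ E]
    {B : Matrix ι ι ℝ} (hB : B.det ≠ 0) (F : (ι → ℝ) → E) :
    ∫ z, F (B *ᵥ z) = |B.det|⁻¹ • ∫ u, F u := by
  have hB_emb : MeasurableEmbedding (toLin' B) :=
    (LinearMap.continuous_of_finiteDimensional _).measurableEmbedding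
      (mulVec_injective_of_isUnit ((isUnit_iff_isUnit_det B).2 hB.isUnit))
  have := hB_emb.integral_map (μ := volume) F
  rw [Real.map_matrix_volume_pi_eq_smul_volume_pi hB, integral_smul_measure,
    ENNReal.toReal_ofReal (abs_nonneg _), abs_inv] at this
  exact this.symm

/-- The density of the Gaussian distribution on `ι → ℝ` with mean `m` and covariance matrix `Γ`
(meaningful for positive definite `Γ`). -/
def multivariateGaussianPDFReal (m : ι → ℝ) (Γ : Matrix ι ι ℝ) (z : ι → ℝ) : ℝ :=
  (2 * Real.pi) ^ (-(Fintype.card ι : ℝ) / 2) * Γ.det ^ (-(1 : ℝ) / 2) *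
    Real.exp (-(1 / 2) * ((z - m) ⬝ᵥ (Γ⁻¹ *ᵥ (z - m))))

theorem det_inv_transpose_mul_diagonal_mul_rpow_neg_half (B : Matrix ι ι ℝ) {d : ι → ℝ}
    (hd : ∀ j, 0 ≤ d j) :
    (Bᵀ * diagonal d * B)⁻¹.det ^ (-(1 : ℝ) / 2) = |B.det| * ∏ j, √(d j) := by
  have hprod : 0 ≤ ∏ j, d j := Finset.prod_nonneg fun j _ => hd j
  have hdet : (Bᵀ * diagonal d * B)⁻¹.det = (B.det ^ 2 * ∏ j, d j)⁻¹ := by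
    rw [det_nonsing_inv, Ring.inverse_eq_inv', det_mul, det_mul, det_transpose, det_diagonal]
    ring
  rw [hdet, neg_div, Real.inv_rpow (by positivity), Real.rpow_neg (by positivity), inv_inv,
    ← Real.sqrt_eq_rpow, Real.sqrt_mul (sq_nonneg _), Real.sqrt_sq_eq_abs,
    Real.sqrt_prod _ fun j _ => hd j]

theorem multivariateGaussianPDFReal_eq_prod {B : Matrix ι ι ℝ} {d : ι → ℝ} (hB : B.det ≠ 0)
    (hd : ∀ j, 0 < d j) (m z : ι → ℝ) :
    multivariateGaussianPDFReal m (Bᵀ * diagonal d * B)⁻¹ z =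
      |B.det| * ∏ j, gaussianPDFReal ((B *ᵥ m) j) (d j)⁻¹.toNNReal ((B *ᵥ z) j) := by
  have hpi : (2 * Real.pi) ^ (-(Fintype.card ι : ℝ) / 2) = ∏ _j : ι, (√(2 * Real.pi))⁻¹ := by
    rw [Finset.prod_const, Finset.card_univ, Real.sqrt_eq_rpow, ← Real.rpow_neg (by positivity),
      ← Real.rpow_natCast, ← Real.rpow_mul (by positivity)]
    ring_nf
  have hpdf (j : ι) : gaussianPDFReal ((B *ᵥ m) j) (d j)⁻¹.toNNReal ((B *ᵥ z) j) =
      (√(2 * Real.pi))⁻¹ * √(d j) *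
        Real.exp (-(1 / 2) * (d j * (B *ᵥ (z - m)) j ^ 2)) := by
    have := hd j
    rw [gaussianPDFReal, Real.coe_toNNReal _ (by positivity), Real.sqrt_mul (by positivity),
      mul_inv, Real.sqrt_inv, inv_inv, mulVec_sub, Pi.sub_apply]
    congr 2
    field_simp
  simp only [hpdf, Finset.prod_mul_distrib, multivariateGaussianPDFReal, hpi,
    det_inv_transpose_mul_diagonal_mul_rpow_neg_half B fun j => (hd j).le,
    nonsing_inv_nonsing_inv _ (isUnit_det_transpose_mul_diagonal_mul hB fun j => (hd j).ne'),
    dotProduct_transpose_mul_diagonal_mul_mulVec, Finset.mul_sum, Real.exp_sum]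
  ring

theorem integral_multivariateGaussianPDFReal_mul_exp {B : Matrix ι ι ℝ} {d e : ι → ℝ}
    (hB : B.det ≠ 0) (hd : ∀ j, 0 < d j) (he : ∀ j, 0 < 1 + e j / d j) (m : ι → ℝ) :
    ∫ z, multivariateGaussianPDFReal m (Bᵀ * diagonal d * B)⁻¹ z *
        Real.exp (-(1 / 2) * (z ⬝ᵥ ((Bᵀ * diagonal e * B) *ᵥ z))) =
      ∏ j, Real.exp (-(e j * (B *ᵥ m) j ^ 2) / (2 * (1 + e j / d j))) / √(1 + e j / d j) := by
  set q : ι → NNReal := fun j => (d j)⁻¹.toNNReal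
  have hq (j : ι) : (q j : ℝ) = (d j)⁻¹ := Real.coe_toNNReal _ (inv_pos.2 (hd j)).le
  have hq_ne (j : ι) : q j ≠ 0 := by simpa [q] using hd j
  have hprod (z : ι → ℝ) : multivariateGaussianPDFReal m (Bᵀ * diagonal d * B)⁻¹ z *
      Real.exp (-(1 / 2) * (z ⬝ᵥ ((Bᵀ * diagonal e * B) *ᵥ z))) =
        |B.det| * ∏ j, gaussianPDFReal ((B *ᵥ m) j) (q j) ((B *ᵥ z) j) •
          Real.exp (-(e j * (B *ᵥ z) j ^ 2) / 2) := by
    rw [multivariateGaussianPDFReal_eq_prod hB hd, dotProduct_transpose_mul_diagonal_mul_mulVec,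
      Finset.mul_sum, Real.exp_sum, mul_assoc, ← Finset.prod_mul_distrib]
    simp only [smul_eq_mul, q]
    ring_nf
  calc _ = ∏ j, ∫ u, Real.exp (-(e j * u ^ 2) / 2) ∂gaussianReal ((B *ᵥ m) j) (q j) := by
        simp only [hprod, integral_gaussianReal_eq_integral_smul (hq_ne _)]
        rw [integral_const_mul, integral_comp_mulVec hB fun u : ι → ℝ =>
            ∏ j, gaussianPDFReal ((B *ᵥ m) j) (q j) (u j) • Real.exp (-(e j * u j ^ 2) / 2),
          integral_fintype_prod_volume_eq_prod fun j (u : ℝ) =>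
            gaussianPDFReal ((B *ᵥ m) j) (q j) u • Real.exp (-(e j * u ^ 2) / 2),
          smul_eq_mul, mul_inv_cancel_left₀ (abs_ne_zero.2 hB)]
    _ = _ := by
        refine Finset.prod_congr rfl fun j _ => ?_
        rw [integral_exp_neg_mul_sq_gaussianReal _ _ (by simpa [hq, ← div_eq_mul_inv] using he j),
          hq, ← div_eq_mul_inv]

end GaussianIntegral

section LowRankProposal

variable {ι κ : Type*} [DecidableEq ι]

/-- The diagonal entries, in eigen-coordinates, of the precision matrix of the proposal which
retains the modes in `S`. -/
def retainedPrecision (μ σ : ℝ) (lam : ι → ℝ) (S : Finset ι) (j : ι) : ℝ :=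
  σ + if j ∈ S then μ * lam j else 0

/-- The diagonal entries, in eigen-coordinates, of the part of the conditional precision matrix
which is lost by discarding the modes outside `S`. -/
def discardedPrecision (μ : ℝ) (lam : ι → ℝ) (S : Finset ι) (j : ι) : ℝ :=
  if j ∈ S then 0 else μ * lam j

section

variable {μ σ : ℝ} {lam : ι → ℝ}

theorem retainedPrecision_pos (hμ : 0 ≤ μ) (hσ : 0 < σ) (hlam : ∀ j, 0 ≤ lam j) (S : Finset ι)
    (j : ι) : 0 < retainedPrecision μ σ lam S j := by
  have := hlam j
  unfold retainedPrecision
  split_ifs <;> positivity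

theorem discardedPrecision_nonneg (hμ : 0 ≤ μ) (hlam : ∀ j, 0 ≤ lam j) (S : Finset ι) (j : ι) :
    0 ≤ discardedPrecision μ lam S j := by
  have := hlam j
  unfold discardedPrecision
  split_ifs <;> positivity

theorem retainedPrecision_add_discardedPrecision (S : Finset ι) (j : ι) :
    retainedPrecision μ σ lam S j + discardedPrecision μ lam S j = μ * lam j + σ := by
  unfold retainedPrecision discardedPrecision
  split_ifs <;> ring

end

variable [Fintype ι] [Fintype κ]

/-- The map `z ↦ V L z`, where the rows of `V` are the vectors `v j`: the coordinates in which both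
precision matrices are diagonal. -/
def eigenCoords (L : Matrix ι ι ℝ) (v : ι → ι → ℝ) : Matrix ι ι ℝ :=
  of v * L

/-- The covariance matrix `Γ_cond` of the conditional distribution. -/
def condCov (A : Matrix κ ι ℝ) (L : Matrix ι ι ℝ) (μ σ : ℝ) : Matrix ι ι ℝ :=
  (μ • (Aᵀ * A) + σ • (Lᵀ * L))⁻¹

/-- The covariance matrix `Γ̂_cond` of the proposal. The set `S` of retained modes is arbitrary; it
consists of the first `k` indices in a truncation at level `k`. -/
def lowRankCov (L : Matrix ι ι ℝ) (v : ι → ι → ℝ) (μ σ : ℝ) (lam : ι → ℝ) (S : Finset ι) :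
    Matrix ι ι ℝ :=
  L⁻¹ * (σ • (1 : Matrix ι ι ℝ) + μ • ∑ j ∈ S, lam j • vecMulVec (v j) (v j))⁻¹ * (L⁻¹)ᵀ

/-- The mean `x̂_cond` of the proposal. -/
def lowRankMean (A : Matrix κ ι ℝ) (L : Matrix ι ι ℝ) (v : ι → ι → ℝ) (μ σ : ℝ) (lam : ι → ℝ)
    (S : Finset ι) (b : κ → ℝ) : ι → ℝ :=
  μ • (lowRankCov L v μ σ lam S *ᵥ (Aᵀ *ᵥ b))

/-- The importance weight `w`: the ratio, up to a constant, of the conditional density to the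
proposal density. -/
def importanceWeight (A : Matrix κ ι ℝ) (L : Matrix ι ι ℝ) (v : ι → ι → ℝ) (μ σ : ℝ)
    (lam : ι → ℝ) (S : Finset ι) (x : ι → ℝ) : ℝ :=
  Real.exp (-(1 / 2) * (x ⬝ᵥ (((condCov A L μ σ)⁻¹ - (lowRankCov L v μ σ lam S)⁻¹) *ᵥ x)))

/-- The constant `N_ℓ`, the reciprocal of the `ℓ`-th moment of the importance weight under the
proposal. -/
def weightNormalizer (A : Matrix κ ι ℝ) (L : Matrix ι ι ℝ) (v : ι → ι → ℝ) (μ σ : ℝ) (lam : ι → ℝ)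
    (S : Finset ι) (b : κ → ℝ) (ℓ : ℕ) : ℝ :=
  Real.exp ((μ ^ 2 / (2 * σ)) * ∑ j ∈ Sᶜ, ((ℓ * μ * lam j) / (ℓ * μ * lam j + σ)) *
      (b ⬝ᵥ (A *ᵥ (L⁻¹ *ᵥ v j))) ^ 2) *
    ∏ j ∈ Sᶜ, √(1 + ℓ * μ * lam j / σ)

variable {A : Matrix κ ι ℝ} {L : Matrix ι ι ℝ} {v : ι → ι → ℝ} {μ σ : ℝ} {lam : ι → ℝ}

theorem det_eigenCoords_ne_zero (hL : IsUnit L.det) (hV : of v * (of v)ᵀ = 1) :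
    (eigenCoords L v).det ≠ 0 := by
  rw [eigenCoords, det_mul]
  exact mul_ne_zero (det_ne_zero_of_right_inverse hV) hL.ne_zero

theorem transpose_mul_self_eq_eigenCoords (hV : of v * (of v)ᵀ = 1) :
    Lᵀ * L = (eigenCoords L v)ᵀ * eigenCoords L v := by
  rw [eigenCoords, transpose_mul, Matrix.mul_assoc, ← Matrix.mul_assoc (of v)ᵀ,
    mul_eq_one_comm.1 hV, Matrix.one_mul]

theorem transpose_mul_self_eq_eigenCoords_of_hessian (hL : IsUnit L.det)
    (hH : (L⁻¹)ᵀ * Aᵀ * A * L⁻¹ = ∑ j, lam j • vecMulVec (v j) (v j)) :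
    Aᵀ * A = (eigenCoords L v)ᵀ * diagonal lam * eigenCoords L v := by
  have hLL : L⁻¹ * L = 1 := nonsing_inv_mul L hL
  have hLLt : Lᵀ * (L⁻¹)ᵀ = 1 := by rw [← transpose_mul, hLL, transpose_one]
  calc Aᵀ * A = (Lᵀ * (L⁻¹)ᵀ) * (Aᵀ * A) * (L⁻¹ * L) := by
        rw [hLLt, hLL, Matrix.one_mul, Matrix.mul_one]
    _ = Lᵀ * ((L⁻¹)ᵀ * Aᵀ * A * L⁻¹) * L := by simp only [Matrix.mul_assoc]
    _ = (eigenCoords L v)ᵀ * diagonal lam * eigenCoords L v := by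
        rw [hH, sum_smul_vecMulVec_eq_transpose_mul_diagonal_mul, eigenCoords, transpose_mul]
        simp only [Matrix.mul_assoc]

theorem condCov_eq (hL : IsUnit L.det) (hV : of v * (of v)ᵀ = 1)
    (hH : (L⁻¹)ᵀ * Aᵀ * A * L⁻¹ = ∑ j, lam j • vecMulVec (v j) (v j)) :
    condCov A L μ σ =
      ((eigenCoords L v)ᵀ * diagonal (fun j => μ * lam j + σ) * eigenCoords L v)⁻¹ := by
  have hdiag : diagonal (fun j => μ * lam j + σ) = μ • diagonal lam + σ • (1 : Matrix ι ι ℝ) := by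
    rw [smul_one_eq_diagonal, ← diagonal_smul, diagonal_add]
    rfl
  rw [condCov, transpose_mul_self_eq_eigenCoords_of_hessian hL hH,
    transpose_mul_self_eq_eigenCoords hV, hdiag]
  simp only [Matrix.mul_add, Matrix.add_mul, Matrix.mul_smul, Matrix.smul_mul, Matrix.mul_one]

theorem lowRankCov_eq (hV : of v * (of v)ᵀ = 1) (S : Finset ι) :
    lowRankCov L v μ σ lam S =
      ((eigenCoords L v)ᵀ * diagonal (retainedPrecision μ σ lam S) * eigenCoords L v)⁻¹ := by
  have hdiag : diagonal (retainedPrecision μ σ lam S) =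
      σ • (1 : Matrix ι ι ℝ) + μ • diagonal (fun j => if j ∈ S then lam j else 0) := by
    rw [smul_one_eq_diagonal, ← diagonal_smul, diagonal_add]
    exact congrArg diagonal (funext fun j => by
      simp only [retainedPrecision, Pi.smul_apply, smul_eq_mul, mul_ite, mul_zero])
  have hsum : σ • (1 : Matrix ι ι ℝ) + μ • ∑ j ∈ S, lam j • vecMulVec (v j) (v j) =
      (of v)ᵀ * diagonal (retainedPrecision μ σ lam S) * of v := by
    rw [hdiag, Matrix.mul_add, Matrix.add_mul, Matrix.mul_smul, Matrix.smul_mul, Matrix.mul_one,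
      mul_eq_one_comm.1 hV, Matrix.mul_smul, Matrix.smul_mul,
      ← sum_smul_vecMulVec_eq_transpose_mul_diagonal_mul]
    simp only [ite_smul, zero_smul, Finset.sum_ite_mem, Finset.univ_inter]
  rw [lowRankCov, hsum, eigenCoords, transpose_mul, transpose_nonsing_inv, ← Matrix.mul_inv_rev,
    Matrix.mul_assoc, ← Matrix.mul_inv_rev]
  simp only [Matrix.mul_assoc]

theorem importanceWeight_pow (hL : IsUnit L.det) (hμ : 0 ≤ μ) (hσ : 0 < σ)
    (hV : of v * (of v)ᵀ = 1) (hlam : ∀ j, 0 ≤ lam j)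
    (hH : (L⁻¹)ᵀ * Aᵀ * A * L⁻¹ = ∑ j, lam j • vecMulVec (v j) (v j)) (S : Finset ι) (ℓ : ℕ)
    (z : ι → ℝ) :
    importanceWeight A L v μ σ lam S z ^ ℓ = Real.exp (-(1 / 2) * (z ⬝ᵥ (((eigenCoords L v)ᵀ *
      diagonal (fun j => ℓ * discardedPrecision μ lam S j) * eigenCoords L v) *ᵥ z))) := by
  have hB := det_eigenCoords_ne_zero hL hV
  have hcond (j : ι) : μ * lam j + σ ≠ 0 := by
    have := hlam j
    positivity
  have hdiff : (condCov A L μ σ)⁻¹ - (lowRankCov L v μ σ lam S)⁻¹ =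
      (eigenCoords L v)ᵀ * diagonal (discardedPrecision μ lam S) * eigenCoords L v := by
    rw [condCov_eq hL hV hH, lowRankCov_eq hV,
      nonsing_inv_nonsing_inv _ (isUnit_det_transpose_mul_diagonal_mul hB hcond),
      nonsing_inv_nonsing_inv _ (isUnit_det_transpose_mul_diagonal_mul hB fun j =>
        (retainedPrecision_pos hμ hσ hlam S j).ne'),
      ← Matrix.sub_mul, ← Matrix.mul_sub, diagonal_sub]
    simp only [← retainedPrecision_add_discardedPrecision S, add_sub_cancel_left]
  rw [importanceWeight, hdiff, ← Real.exp_nat_mul, dotProduct_transpose_mul_diagonal_mul_mulVec,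
    dotProduct_transpose_mul_diagonal_mul_mulVec, mul_left_comm, Finset.mul_sum]
  simp only [mul_assoc]

theorem eigenCoords_mulVec_inv_mulVec (hL : IsUnit L.det) (hV : of v * (of v)ᵀ = 1) (j : ι) :
    eigenCoords L v *ᵥ (L⁻¹ *ᵥ v j) = Pi.single j 1 := by
  have hrow : v j = (of v)ᵀ *ᵥ Pi.single j 1 := by rw [mulVec_single_one]; rfl
  rw [eigenCoords, mulVec_mulVec, mul_nonsing_inv_cancel_right _ _ hL, hrow, mulVec_mulVec, hV,
    one_mulVec]

theorem eigenCoords_mulVec_lowRankMean (hL : IsUnit L.det) (hμ : 0 ≤ μ) (hσ : 0 < σ)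
    (hV : of v * (of v)ᵀ = 1) (hlam : ∀ j, 0 ≤ lam j) (S : Finset ι) (b : κ → ℝ) (j : ι) :
    (eigenCoords L v *ᵥ lowRankMean A L v μ σ lam S b) j =
      μ * (b ⬝ᵥ (A *ᵥ (L⁻¹ *ᵥ v j))) / retainedPrecision μ σ lam S j := by
  have hd (i : ι) : retainedPrecision μ σ lam S i ≠ 0 :=
    (retainedPrecision_pos hμ hσ hlam S i).ne'
  set B := eigenCoords L v
  set D := diagonal (retainedPrecision μ σ lam S)
  set xhat := lowRankMean A L v μ σ lam S b with hxhat
  have normal_eq : (Bᵀ * D * B) *ᵥ xhat = μ • (Aᵀ *ᵥ b) := by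
    rw [hxhat, lowRankMean, lowRankCov_eq hV, mulVec_smul, mulVec_mulVec, mul_nonsing_inv _
      (isUnit_det_transpose_mul_diagonal_mul (det_eigenCoords_ne_zero hL hV) hd), one_mulVec]
  rw [eq_div_iff (hd j)]
  calc (B *ᵥ xhat) j * retainedPrecision μ σ lam S j
      = Pi.single j 1 ⬝ᵥ (D *ᵥ (B *ᵥ xhat)) := by
        rw [single_one_dotProduct, mulVec_diagonal, mul_comm]
    _ = (L⁻¹ *ᵥ v j) ⬝ᵥ ((Bᵀ * D * B) *ᵥ xhat) := by
        rw [← eigenCoords_mulVec_inv_mulVec hL hV, ← mulVec_mulVec, ← mulVec_mulVec,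
          dotProduct_mulVec _ Bᵀ, vecMul_transpose]
    _ = μ * (b ⬝ᵥ (A *ᵥ (L⁻¹ *ᵥ v j))) := by
        rw [normal_eq, dotProduct_smul, smul_eq_mul, dotProduct_mulVec, vecMul_transpose,
          dotProduct_comm]

theorem weightNormalizer_pos (hμ : 0 ≤ μ) (hσ : 0 < σ) (hlam : ∀ j, 0 ≤ lam j) (S : Finset ι)
    (b : κ → ℝ) (ℓ : ℕ) : 0 < weightNormalizer A L v μ σ lam S b ℓ := by
  refine mul_pos (Real.exp_pos _) (Finset.prod_pos fun j _ => Real.sqrt_pos.2 ?_)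
  have := hlam j
  positivity

theorem integral_multivariateGaussianPDFReal_mul_importanceWeight_pow (hL : IsUnit L.det)
    (hμ : 0 ≤ μ) (hσ : 0 < σ) (hV : of v * (of v)ᵀ = 1) (hlam : ∀ j, 0 ≤ lam j)
    (hH : (L⁻¹)ᵀ * Aᵀ * A * L⁻¹ = ∑ j, lam j • vecMulVec (v j) (v j)) (S : Finset ι) (b : κ → ℝ)
    (ℓ : ℕ) :
    ∫ z, multivariateGaussianPDFReal (lowRankMean A L v μ σ lam S b) (lowRankCov L v μ σ lam S) z *
        importanceWeight A L v μ σ lam S z ^ ℓ =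
      1 / weightNormalizer A L v μ σ lam S b ℓ := by
  have hd := retainedPrecision_pos hμ hσ hlam S
  have he (j : ι) : 0 < 1 + ℓ * discardedPrecision μ lam S j / retainedPrecision μ σ lam S j := by
    have := hd j
    have := discardedPrecision_nonneg hμ hlam S j
    positivity
  simp only [importanceWeight_pow hL hμ hσ hV hlam hH]
  rw [lowRankCov_eq hV, integral_multivariateGaussianPDFReal_mul_exp
    (det_eigenCoords_ne_zero hL hV) hd he, weightNormalizer, Finset.mul_sum, Real.exp_sum,
    ← Finset.prod_mul_distrib, one_div, ← Finset.prod_inv_distrib,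
    ← Finset.prod_subset (Finset.subset_univ Sᶜ)]
  · refine Finset.prod_congr rfl fun j hj => ?_
    have hj : j ∉ S := Finset.mem_compl.1 hj
    have := hlam j
    rw [eigenCoords_mulVec_lowRankMean hL hμ hσ hV hlam, mul_inv, ← Real.exp_neg,
      ← div_eq_mul_inv]
    simp only [retainedPrecision, discardedPrecision, hj, if_false, add_zero]
    congr 2
    · field_simp
      ring
    · ring_nf
  · intro j _ hj
    have hj : j ∈ S := by simpa using hj
    simp [discardedPrecision, hj]

theorem stmt12_general (hL : IsUnit L.det) (hμ : 0 ≤ μ) (hσ : 0 < σ)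
    (hv : ∀ i j, v i ⬝ᵥ v j = if i = j then 1 else 0) (hlam : ∀ j, 0 ≤ lam j)
    (hH : (L⁻¹)ᵀ * Aᵀ * A * L⁻¹ = ∑ j, lam j • vecMulVec (v j) (v j)) (S : Finset ι)
    (b : κ → ℝ) (x : ι → ℝ) {ε : ℝ} (hε : 0 < ε) :
    ∫ z in {z | ε ≤ |importanceWeight A L v μ σ lam S z / importanceWeight A L v μ σ lam S x -
        1 / (weightNormalizer A L v μ σ lam S b 1 * importanceWeight A L v μ σ lam S x)|},
      multivariateGaussianPDFReal (lowRankMean A L v μ σ lam S b) (lowRankCov L v μ σ lam S) z ≤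
    (1 / weightNormalizer A L v μ σ lam S b 2 - 1 / weightNormalizer A L v μ σ lam S b 1 ^ 2) /
      (ε ^ 2 * importanceWeight A L v μ σ lam S x ^ 2) := by
  have hV := of_mul_transpose_eq_one hv
  set g := multivariateGaussianPDFReal (lowRankMean A L v μ σ lam S b) (lowRankCov L v μ σ lam S)
  set w := importanceWeight A L v μ σ lam S
  set N := weightNormalizer A L v μ σ lam S b
  have moment (ℓ : ℕ) : ∫ z, g z * (w z / w x) ^ ℓ = 1 / N ℓ / w x ^ ℓ := by
    simp only [div_pow, mul_div_assoc', integral_div]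
    rw [integral_multivariateGaussianPDFReal_mul_importanceWeight_pow hL hμ hσ hV hlam hH]
  have hw_pos (z : ι → ℝ) : 0 < w z := Real.exp_pos _
  have hN_pos (ℓ : ℕ) : 0 < N ℓ := weightNormalizer_pos hμ hσ hlam S b ℓ
  have hw : Measurable w := (by unfold w importanceWeight; fun_prop : Continuous w).measurable
  have hg (z : ι → ℝ) : 0 ≤ g z := by
    simp only [g, lowRankCov_eq hV, multivariateGaussianPDFReal_eq_prod
      (det_eigenCoords_ne_zero hL hV) (retainedPrecision_pos hμ hσ hlam S)]
    exact mul_nonneg (abs_nonneg _) (Finset.prod_nonneg fun _ _ => gaussianPDFReal_nonneg _ _ _)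
  have hg_one : ∫ z, g z = 1 := by simpa [N, weightNormalizer] using moment 0
  have hg_sq : Integrable fun z => g z * (w z / w x) ^ 2 :=
    .of_integral_ne_zero (by rw [moment]; have := hw_pos x; have := hN_pos 2; positivity)
  have hmean : ∫ z, g z * (w z / w x) = 1 / (N 1 * w x) := by
    simpa only [pow_one, div_div] using moment 1
  have chebyshev := setIntegral_abs_sub_integral_ge_le hg hg_one (hw.div_const (w x)) hg_sq hε
  rw [moment, hmean] at chebyshev
  convert chebyshev using 1
  field_simp

end LowRankProposal

theorem stmt12
    (m n : ℕ) (hm : 0 < m) (hn : 0 < n)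
    (A : Matrix (Fin m) (Fin n) ℝ) (L : Matrix (Fin n) (Fin n) ℝ) (hL : IsUnit L.det)
    (μ σ : ℝ) (hμ : 0 < μ) (hσ : 0 < σ)
    (b : Fin m → ℝ)
    (v : Fin n → Fin n → ℝ) (lam : Fin n → ℝ)
    (horth : ∀ i j, v i ⬝ᵥ v j = if i = j then (1 : ℝ) else 0)
    (hlam_nonneg : ∀ j, 0 ≤ lam j) (hlam_anti : Antitone lam)
    (hHdecomp : (L⁻¹)ᵀ * Aᵀ * A * L⁻¹ = ∑ j, lam j • vecMulVec (v j) (v j))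
    (k : ℕ) (hk : k ≤ n)
    (Γcond : Matrix (Fin n) (Fin n) ℝ)
    (hΓcond : Γcond = (μ • (Aᵀ * A) + σ • (Lᵀ * L))⁻¹)
    (Γhat : Matrix (Fin n) (Fin n) ℝ)
    (hΓhat : Γhat = L⁻¹ * (σ • (1 : Matrix (Fin n) (Fin n) ℝ) +
        μ • ∑ j ∈ Finset.univ.filter (fun j : Fin n => (j : ℕ) < k),
          lam j • vecMulVec (v j) (v j))⁻¹ * (L⁻¹)ᵀ)
    (xhat : Fin n → ℝ) (hxhat : xhat = μ • (Γhat *ᵥ (Aᵀ *ᵥ b)))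
    (w : (Fin n → ℝ) → ℝ)
    (hw : ∀ x, w x = Real.exp (-(1/2) * (x ⬝ᵥ ((Γcond⁻¹ - Γhat⁻¹) *ᵥ x))))
    (η : (Fin n → ℝ) → (Fin n → ℝ) → ℝ)
    (hη : ∀ z x, η z x = w z / w x)
    (gfun : (Fin n → ℝ) → ℝ)
    (hgfun : ∀ x, gfun x = (2 * Real.pi) ^ (-(n : ℝ) / 2) * Γhat.det ^ (-(1 : ℝ) / 2) *
        Real.exp (-(1/2) * ((x - xhat) ⬝ᵥ (Γhat⁻¹ *ᵥ (x - xhat)))))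
    (N : ℕ → ℝ)
    (hN : ∀ ℓ : ℕ, N ℓ = Real.exp ((μ ^ 2 / (2 * σ)) *
        ∑ j ∈ Finset.univ.filter (fun j : Fin n => k ≤ (j : ℕ)),
          (((ℓ : ℝ) * μ * lam j) / ((ℓ : ℝ) * μ * lam j + σ)) *
            (b ⬝ᵥ (A *ᵥ (L⁻¹ *ᵥ v j))) ^ 2) *
      ∏ j ∈ Finset.univ.filter (fun j : Fin n => k ≤ (j : ℕ)),
        Real.sqrt (1 + (ℓ : ℝ) * μ * lam j / σ))
    :
    ∀ x : Fin n → ℝ, ∀ ε : ℝ, 0 < ε →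
      (∫ z in {z : Fin n → ℝ | ε ≤ |η z x - 1 / (N 1 * w x)|}, gfun z) ≤
        (1 / N 2 - 1 / N 1 ^ 2) / (ε ^ 2 * w x ^ 2) := by
  intro x ε hε
  subst hΓcond hΓhat hxhat
  have h := stmt12_general hL hμ.le hσ horth hlam_nonneg hHdecomp
    (Finset.univ.filter fun j : Fin n => (j : ℕ) < k) b x hε
  simp only [weightNormalizer, Finset.compl_filter, not_lt] at h
  simp only [hη, hw, hgfun, hN]
  simpa [importanceWeight, lowRankMean, lowRankCov, condCov, multivariateGaussianPDFReal] using h
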